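/- arXiv:1403.0624 — 2 statements merged into one kernel-verified Lean document; each statement's English description precedes it below -/
import Mathlib

section
/- Lemma 4.1 (generic decomposition of bumps): Let J ⊆ ℝ be a bounded interval of positive length and let φ_J : ℝ → ℂ be a smooth function such that for every l, α ∈ ℕ there is a constant A_{l,α} with |φ_J^{(l)}(x)| ≤ A_{l,α} |J|^{−l} (1 + dist(x, J)/|J|)^{−α} for all x ∈ ℝ. Then there exist smooth functions (φ^ℓ_J)_{ℓ ∈ ℕ} with: supp φ^ℓ_J ⊆ 2^ℓ J for every ℓ; φ_J(x) = Σ_{ℓ ∈ ℕ} 2^{−100ℓ} φ^ℓ_J(x) for every x ∈ ℝ; and for every l, α ∈ ℕ a constant A'_{l,α}, depending only on finitely many of the A_{l',α'}, such that |(φ^ℓ_J)^{(l)}(x)| ≤ A'_{l,α} |J|^{−l} (1 + dist(x, J)/|J|)^{−α} for all ℓ ∈ ℕ and x ∈ ℝ. Moreover, if ∫_ℝ φ_J(x) dx = 0, then the φ^ℓ_J can be chosen so that additionally ∫_ℝ φ^ℓ_J(x) dx = 0 for every ℓ ∈ ℕ. -/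
open MeasureTheory Filter Set

/-!
Let `r ≥ 1`. Multiply `φ` by a smooth cutoff that vanishes on `(r/2) J` and equals `1` off `r J`:
on the support of the cutoff the weight `1 + dist(x, J)/|J|` is at least of order `r`, so spending
`N` powers of the decay of `φ` gains a factor `r ^ (-N)`. Subtracting a multiple of a fixed bump
supported in `J` makes the integral of the result vanish, does not change it off `r J`, and
preserves the gain, because a bump integrates to at most a constant times `|J|`. Applied with
`r = 2 ^ n`, this gives tails `F 0 = φ, F 1, F 2, …` of rapidly decreasing size with
`F (n + 1) = φ` off `2 ^ n J`, and the decomposition is the telescoping series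
`φ = ∑ (F n - F (n + 1))`.
-/

open scoped ContDiff

section Preliminaries

lemma iteratedDeriv_comp_sub_div {𝕜 F : Type*} [NontriviallyNormedField 𝕜] [NormedAddCommGroup F]
    [NormedSpace 𝕜 F] {l : ℕ} {f : 𝕜 → F} (hf : ContDiff 𝕜 l f) (c s x : 𝕜) :
    iteratedDeriv l (fun y => f ((y - c) / s)) x =
      (s ^ l)⁻¹ • iteratedDeriv l f ((x - c) / s) := by
  simp only [div_eq_inv_mul]
  rw [iteratedDeriv_comp_sub_const l (fun y => f (s⁻¹ * y)) c, iteratedDeriv_comp_const_smul hf,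
    inv_pow]

lemma exists_norm_iteratedDeriv_le_of_hasCompactSupport {F : Type*} [NormedAddCommGroup F]
    [NormedSpace ℝ F] {f : ℝ → F} (hc : HasCompactSupport f) (hf : ContDiff ℝ ∞ f) :
    ∃ M : ℕ → ℝ, ∀ k x, ‖iteratedDeriv k f x‖ ≤ M k := by
  have bound (k : ℕ) : ∃ M, ∀ x, ‖iteratedFDeriv ℝ k f x‖ ≤ M :=
    (hc.iteratedFDeriv k).exists_bound_of_continuous
      (hf.continuous_iteratedFDeriv (mod_cast le_top))
  choose M hM using bound
  exact ⟨M, fun k x => norm_iteratedFDeriv_eq_norm_iteratedDeriv.ge.trans (hM k x)⟩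

lemma sub_div_mem_closedBall_zero {c s t x : ℝ} (hs : 0 < s) :
    (x - c) / s ∈ Metric.closedBall 0 t ↔ x ∈ Metric.closedBall c (t * s) := by
  rw [mem_closedBall_zero_iff, norm_div, Real.norm_of_nonneg hs.le, div_le_iff₀ hs,
    mem_closedBall_iff_norm]

lemma hasSum_sub_succ {G : Type*} [SeminormedAddCommGroup G] {f : ℕ → G}
    (hf : Summable fun n => ‖f n‖) : HasSum (fun n => f n - f (n + 1)) (f 0) := by
  have hf_succ : Summable fun n => ‖f (n + 1)‖ := (summable_nat_add_iff 1).2 hf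
  have h_abs : Summable fun n => ‖f n - f (n + 1)‖ :=
    .of_nonneg_of_le (fun _ => norm_nonneg _) (fun _ => norm_sub_le _ _) (hf.add hf_succ)
  rw [hasSum_iff_tendsto_nat_of_summable_norm h_abs]
  simp only [Finset.sum_range_sub']
  have h_lim : Tendsto f atTop (nhds 0) :=
    tendsto_zero_iff_norm_tendsto_zero.2 hf.tendsto_atTop_zero
  simpa only [sub_zero] using h_lim.const_sub (f 0)

lemma integrable_inv_one_add_sub_div_sq (c : ℝ) {s : ℝ} (hs : s ≠ 0) :
    Integrable fun x : ℝ => (1 + ((x - c) / s) ^ 2)⁻¹ :=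
  (integrable_inv_one_add_sq.comp_div hs).comp_sub_right c

lemma integral_inv_one_add_sub_div_sq (c s : ℝ) :
    ∫ x : ℝ, (1 + ((x - c) / s) ^ 2)⁻¹ = |s| * Real.pi := by
  rw [integral_sub_right_eq_self (fun x => (1 + (x / s) ^ 2)⁻¹),
    Measure.integral_comp_div (fun x => (1 + x ^ 2)⁻¹), integral_univ_inv_one_add_sq, smul_eq_mul]

end Preliminaries

/-- The weight `1 + dist(x, J)/|J|` of the interval `J = [a, b]`, whose negative powers measure the
decay of bumps adapted to `J`. -/
noncomputable def bumpWeight (a b x : ℝ) : ℝ := 1 + Metric.infDist x (Icc a b) / (b - a)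

section BumpWeight

variable {a b : ℝ}

lemma one_le_bumpWeight (hab : a ≤ b) (x : ℝ) : 1 ≤ bumpWeight a b x :=
  le_add_of_nonneg_right (div_nonneg Metric.infDist_nonneg (sub_nonneg.2 hab))

lemma bumpWeight_pos (hab : a ≤ b) (x : ℝ) : 0 < bumpWeight a b x :=
  one_pos.trans_le (one_le_bumpWeight hab x)

lemma bumpWeight_of_mem {x : ℝ} (hx : x ∈ Icc a b) : bumpWeight a b x = 1 := by
  rw [bumpWeight, Metric.infDist_zero_of_mem hx, zero_div, add_zero]

lemma abs_sub_midpoint_div_le_bumpWeight (hab : a < b) (x : ℝ) :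
    |(x - (a + b) / 2) / (b - a)| ≤ bumpWeight a b x := by
  have hL : 0 < b - a := sub_pos.2 hab
  obtain ⟨y, ⟨hay, hyb⟩, hxy⟩ := isCompact_Icc.exists_infDist_eq_dist (nonempty_Icc.2 hab.le) x
  have hym : |y - (a + b) / 2| ≤ b - a := abs_le.2 ⟨by linarith, by linarith⟩
  rw [bumpWeight, hxy, Real.dist_eq, abs_div, abs_of_pos hL, one_add_div hL.ne',
    div_le_div_iff_of_pos_right hL]
  linarith [abs_sub_le x y ((a + b) / 2)]

lemma inv_bumpWeight_sq_le (hab : a < b) (x : ℝ) :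
    (bumpWeight a b x ^ 2)⁻¹ ≤ 2 * (1 + ((x - (a + b) / 2) / (b - a)) ^ 2)⁻¹ := by
  have h_one := one_le_pow₀ (one_le_bumpWeight hab.le x) (n := 2)
  have h_sq := sq_le_sq.2 ((abs_sub_midpoint_div_le_bumpWeight hab x).trans (le_abs_self _))
  rw [← div_eq_mul_inv, le_div_iff₀ (by positivity), inv_mul_le_iff₀ (by positivity)]
  linarith

end BumpWeight

section AdaptedBump

variable {E : Type*} [NormedAddCommGroup E] [NormedSpace ℝ E]

/-- `φ` is a smooth bump adapted to the interval `[a, b]` with constants `A l α`, indexed by the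
order `l` of the derivative and the power `α` of decay. -/
structure IsAdaptedBump (A : ℕ → ℕ → ℝ) (a b : ℝ) (φ : ℝ → E) : Prop where
  contDiff : ContDiff ℝ ∞ φ
  norm_iteratedDeriv_le : ∀ l α x,
    ‖iteratedDeriv l φ x‖ ≤ A l α / ((b - a) ^ l * bumpWeight a b x ^ α)

lemma isAdaptedBump_iff_rpow {A : ℕ → ℕ → ℝ} {a b : ℝ} {φ : ℝ → E} :
    IsAdaptedBump A a b φ ↔ ContDiff ℝ ∞ φ ∧ ∀ l α : ℕ, ∀ x, ‖iteratedDeriv l φ x‖ ≤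
      A l α * (b - a) ^ (-(l : ℝ)) *
        (1 + Metric.infDist x (Icc a b) / (b - a)) ^ (-(α : ℝ)) := by
  have h_rpow (l α : ℕ) (x : ℝ) : A l α * (b - a) ^ (-(l : ℝ)) * bumpWeight a b x ^ (-(α : ℝ)) =
      A l α / ((b - a) ^ l * bumpWeight a b x ^ α) := by
    simp only [Real.rpow_neg_natCast, zpow_neg, zpow_natCast, div_eq_mul_inv, mul_inv, mul_assoc]
  simp only [bumpWeight] at h_rpow
  simp only [h_rpow]
  exact ⟨fun h => ⟨h.1, h.2⟩, fun h => ⟨h.1, h.2⟩⟩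

namespace IsAdaptedBump

variable {A B : ℕ → ℕ → ℝ} {a b : ℝ} {φ ψ : ℝ → E}

lemma contDiffAt (hφ : IsAdaptedBump A a b φ) (l : ℕ) (x : ℝ) : ContDiffAt ℝ l φ x :=
  hφ.contDiff.contDiffAt.of_le (mod_cast le_top)

lemma norm_le (hφ : IsAdaptedBump A a b φ) (α : ℕ) (x : ℝ) :
    ‖φ x‖ ≤ A 0 α / bumpWeight a b x ^ α := by
  simpa only [iteratedDeriv_zero, pow_zero, one_mul] using hφ.norm_iteratedDeriv_le 0 α x

lemma constant_nonneg (hφ : IsAdaptedBump A a b φ) (hab : a < b) (l α : ℕ) : 0 ≤ A l α := by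
  have := sub_pos.2 hab
  have := bumpWeight_pos hab.le a
  have h_div := (norm_nonneg _).trans (hφ.norm_iteratedDeriv_le l α a)
  exact by simpa using (le_div_iff₀ (by positivity)).1 h_div

lemma mono (hφ : IsAdaptedBump A a b φ) (hab : a ≤ b) (hAB : ∀ l α, A l α ≤ B l α) :
    IsAdaptedBump B a b φ where
  contDiff := hφ.contDiff
  norm_iteratedDeriv_le l α x := by
    have := sub_nonneg.2 hab
    have := bumpWeight_pos hab x
    exact (hφ.norm_iteratedDeriv_le l α x).trans (by gcongr; exact hAB l α)

lemma sub (hφ : IsAdaptedBump A a b φ) (hψ : IsAdaptedBump B a b ψ) :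
    IsAdaptedBump (fun l α => A l α + B l α) a b (fun x => φ x - ψ x) where
  contDiff := hφ.contDiff.sub hψ.contDiff
  norm_iteratedDeriv_le l α x := by
    rw [iteratedDeriv_fun_sub (hφ.contDiffAt l x) (hψ.contDiffAt l x), add_div]
    exact norm_sub_le_of_le (hφ.norm_iteratedDeriv_le l α x) (hψ.norm_iteratedDeriv_le l α x)

lemma const_smul (hφ : IsAdaptedBump A a b φ) (c : ℝ) :
    IsAdaptedBump (fun l α => ‖c‖ * A l α) a b (fun x => c • φ x) where
  contDiff := contDiff_const.smul hφ.contDiff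
  norm_iteratedDeriv_le l α x := by
    rw [iteratedDeriv_fun_const_smul (hφ.contDiffAt l x), norm_smul, mul_div_assoc]
    gcongr
    exact hφ.norm_iteratedDeriv_le l α x

lemma smul_const {ρ : ℝ → ℝ} (hρ : IsAdaptedBump A a b ρ) (v : E) :
    IsAdaptedBump (fun l α => ‖v‖ * A l α) a b (fun x => ρ x • v) where
  contDiff := hρ.contDiff.smul contDiff_const
  norm_iteratedDeriv_le l α x := by
    rw [iteratedDeriv_smul_const (hρ.contDiffAt l x), norm_smul, mul_comm, mul_div_assoc]
    gcongr
    exact hρ.norm_iteratedDeriv_le l α x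

lemma smul {D : ℕ → ℝ} {N : ℕ} {θ : ℝ → ℝ} (hφ : IsAdaptedBump A a b φ) (hab : a < b)
    (hθ : ContDiff ℝ ∞ θ)
    (hD : ∀ k x, ‖iteratedDeriv k θ x‖ ≤ D k * bumpWeight a b x ^ N / (b - a) ^ k) :
    IsAdaptedBump
      (fun l α => ∑ i ∈ Finset.range (l + 1), l.choose i * D i * A (l - i) (α + N)) a b
      (fun x => θ x • φ x) where
  contDiff := hθ.smul hφ.contDiff
  norm_iteratedDeriv_le l α x := by
    have hw := (bumpWeight_pos hab.le x).ne'
    have hL := (sub_pos.2 hab).ne'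
    have leibniz := norm_iteratedFDeriv_smul_le hθ hφ.contDiff x (n := l) (mod_cast le_top)
    simp only [norm_iteratedFDeriv_eq_norm_iteratedDeriv] at leibniz
    rw [Finset.sum_div]
    refine leibniz.trans (Finset.sum_le_sum fun i hi => ?_)
    have hi : i ≤ l := Finset.mem_range_succ_iff.1 hi
    have h_pow : (b - a) ^ l = (b - a) ^ i * (b - a) ^ (l - i) := by
      rw [← pow_add, Nat.add_sub_cancel' hi]
    calc l.choose i * ‖iteratedDeriv i θ x‖ * ‖iteratedDeriv (l - i) φ x‖
        ≤ l.choose i * (D i * bumpWeight a b x ^ N / (b - a) ^ i) *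
          (A (l - i) (α + N) / ((b - a) ^ (l - i) * bumpWeight a b x ^ (α + N))) := by
          have hDi := hD i x
          have := (norm_nonneg _).trans hDi
          gcongr
          exact hφ.norm_iteratedDeriv_le (l - i) (α + N) x
      _ = l.choose i * D i * A (l - i) (α + N) / ((b - a) ^ l * bumpWeight a b x ^ α) := by
          rw [h_pow, pow_add]
          field_simp

lemma norm_le_mul_inv_one_add_sq (hφ : IsAdaptedBump A a b φ) (hab : a < b) (x : ℝ) :
    ‖φ x‖ ≤ A 0 2 * (2 * (1 + ((x - (a + b) / 2) / (b - a)) ^ 2)⁻¹) :=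
  (hφ.norm_le 2 x).trans
    (mul_le_mul_of_nonneg_left (inv_bumpWeight_sq_le hab x) (hφ.constant_nonneg hab 0 2))

lemma integrable (hφ : IsAdaptedBump A a b φ) (hab : a < b) : Integrable φ :=
  (((integrable_inv_one_add_sub_div_sq _ (sub_pos.2 hab).ne').const_mul 2).const_mul _).mono'
    hφ.contDiff.continuous.aestronglyMeasurable (.of_forall (hφ.norm_le_mul_inv_one_add_sq hab))

lemma norm_integral_le (hφ : IsAdaptedBump A a b φ) (hab : a < b) :
    ‖∫ x, φ x‖ ≤ 2 * Real.pi * A 0 2 * (b - a) := by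
  have hL : 0 < b - a := sub_pos.2 hab
  have h_int := integrable_inv_one_add_sub_div_sq ((a + b) / 2) hL.ne'
  refine (norm_integral_le_of_norm_le ((h_int.const_mul 2).const_mul _)
    (.of_forall (hφ.norm_le_mul_inv_one_add_sq hab))).trans_eq ?_
  rw [integral_const_mul, integral_const_mul, integral_inv_one_add_sub_div_sq, abs_of_pos hL]
  ring

end IsAdaptedBump

lemma isAdaptedBump_comp_sub_div {f : ℝ → E} {M : ℕ → ℝ} {a b : ℝ} (hab : a < b)
    (hf : ContDiff ℝ ∞ f) (hsupp : tsupport f ⊆ Metric.closedBall 0 (1 / 2))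
    (hM : ∀ l y, ‖iteratedDeriv l f y‖ ≤ M l) :
    IsAdaptedBump (fun l _ => M l) a b (fun x => f ((x - (a + b) / 2) / (b - a))) where
  contDiff := hf.comp ((contDiff_id.sub contDiff_const).div_const _)
  norm_iteratedDeriv_le l α x := by
    have hL : 0 < b - a := sub_pos.2 hab
    have hw := bumpWeight_pos hab.le x
    rw [iteratedDeriv_comp_sub_div (hf.of_le (mod_cast le_top)), norm_smul, norm_inv, norm_pow,
      Real.norm_of_nonneg hL.le]
    set y := (x - (a + b) / 2) / (b - a) with hy
    by_cases h_zero : iteratedDeriv l f y = 0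
    · have := (norm_nonneg _).trans (hM l y)
      rw [h_zero, norm_zero, mul_zero]
      positivity
    · have hy_mem : y ∈ Metric.closedBall 0 (1 / 2) :=
        hsupp (support_iteratedFDeriv_subset (𝕜 := ℝ) l fun h => h_zero (by
          rw [iteratedDeriv_eq_iteratedFDeriv, h]; rfl))
      have hx : x ∈ Icc a b := by
        rwa [hy, sub_div_mem_closedBall_zero hL, one_div_mul_eq_div, ← Real.Icc_eq_closedBall]
          at hy_mem
      rw [bumpWeight_of_mem hx, one_pow, mul_one, inv_mul_eq_div]
      gcongr
      exact hM l y

/-- The bump on `ℝ` from which all cutoffs are obtained by rescaling: it equals `1` on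
`[-1/4, 1/4]` and is supported in `[-1/2, 1/2]`. -/
noncomputable def referenceBump : ContDiffBump (0 : ℝ) := ⟨1 / 4, 1 / 2, by norm_num, by norm_num⟩

lemma exists_isAdaptedBump_integral_eq : ∃ S : ℕ → ℝ, ∀ a b : ℝ, a < b → ∃ ρ : ℝ → ℝ,
    IsAdaptedBump (fun l _ => S l) a b ρ ∧ (∀ x ∉ Icc a b, ρ x = 0) ∧ ∫ x, ρ x = b - a := by
  set f := referenceBump.normed volume
  have hf : ContDiff ℝ ∞ f := referenceBump.contDiff_normed
  have hf_supp : tsupport f = Metric.closedBall 0 (1 / 2) := referenceBump.tsupport_normed_eq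
  obtain ⟨S, hS⟩ := exists_norm_iteratedDeriv_le_of_hasCompactSupport
    (f := f) referenceBump.hasCompactSupport_normed hf
  refine ⟨S, fun a b hab => ⟨fun x => f ((x - (a + b) / 2) / (b - a)),
    isAdaptedBump_comp_sub_div hab hf hf_supp.le hS, fun x hx => ?_, ?_⟩⟩
  · refine image_eq_zero_of_notMem_tsupport ?_
    rwa [hf_supp, sub_div_mem_closedBall_zero (sub_pos.2 hab), one_div_mul_eq_div,
      ← Real.Icc_eq_closedBall]
  · rw [integral_sub_right_eq_self (fun x => f (x / (b - a))), Measure.integral_comp_div,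
      referenceBump.integral_normed, abs_of_pos (sub_pos.2 hab), smul_eq_mul, mul_one]

lemma exists_norm_iteratedDeriv_one_sub_referenceBump_le (N : ℕ) : ∃ D : ℕ → ℝ, ∀ k z,
    ‖iteratedDeriv k (fun y => 1 - referenceBump y) z‖ ≤ D k * |z| ^ N := by
  have hf : ContDiff ℝ ∞ referenceBump := referenceBump.contDiff
  obtain ⟨M, hM⟩ := exists_norm_iteratedDeriv_le_of_hasCompactSupport
    referenceBump.hasCompactSupport hf
  refine ⟨fun k => (1 + M k) * 4 ^ N, fun k z => ?_⟩
  have hM_nonneg : 0 ≤ M k := (norm_nonneg _).trans (hM k z)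
  rw [mul_assoc, ← mul_pow]
  rcases lt_or_ge |z| (1 / 4) with hz | hz
  · have h_zero : (fun y => 1 - referenceBump y) =ᶠ[nhds z] fun _ => 0 :=
      (referenceBump.eventuallyEq_one_of_mem_ball (mem_ball_zero_iff.2 hz)).mono fun _ hy =>
        sub_eq_zero.2 hy.symm
    rw [h_zero.iteratedDeriv_eq, iteratedDeriv_fun_const_zero, norm_zero]
    positivity
  · have h_const : ‖iteratedDeriv k (fun _ : ℝ => (1 : ℝ)) z‖ ≤ 1 := by
      rw [iteratedDeriv_const]; split_ifs <;> simp
    rw [iteratedDeriv_fun_sub contDiffAt_const (hf.contDiffAt.of_le (mod_cast le_top))]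
    calc _ ≤ 1 + M k := norm_sub_le_of_le h_const (hM k z)
      _ ≤ (1 + M k) * (4 * |z|) ^ N :=
        le_mul_of_one_le_right (by positivity) (one_le_pow₀ (by linarith))

lemma exists_outer_cutoff (N : ℕ) : ∃ D : ℕ → ℝ, ∀ a b r : ℝ, a < b → 1 ≤ r → ∃ θ : ℝ → ℝ,
    ContDiff ℝ ∞ θ ∧
    (∀ k x, ‖iteratedDeriv k θ x‖ ≤ D k / r ^ N * bumpWeight a b x ^ N / (b - a) ^ k) ∧
    ∀ x ∉ Metric.closedBall ((a + b) / 2) (r * (b - a) / 2), θ x = 1 := by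
  obtain ⟨D, hD⟩ := exists_norm_iteratedDeriv_one_sub_referenceBump_le N
  have hη : ContDiff ℝ ∞ (fun y => 1 - referenceBump y) :=
    contDiff_const.sub referenceBump.contDiff
  refine ⟨D, fun a b r hab hr =>
    ⟨fun x => 1 - referenceBump ((x - (a + b) / 2) / (r * (b - a))),
      hη.comp ((contDiff_id.sub contDiff_const).div_const _), fun k x => ?_, fun x hx => ?_⟩⟩
  · have hL : 0 < b - a := sub_pos.2 hab
    have hD_nonneg : 0 ≤ D k := by simpa using (norm_nonneg _).trans (hD k 1)
    rw [iteratedDeriv_comp_sub_div (hη.of_le (mod_cast le_top)), norm_smul, norm_inv, norm_pow,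
      norm_mul, Real.norm_of_nonneg (zero_le_one.trans hr), Real.norm_of_nonneg hL.le]
    calc ((r * (b - a)) ^ k)⁻¹ * ‖iteratedDeriv k (fun y => 1 - referenceBump y)
            ((x - (a + b) / 2) / (r * (b - a)))‖
        ≤ ((1 * (b - a)) ^ k)⁻¹ * (D k * |(x - (a + b) / 2) / (r * (b - a))| ^ N) := by
          gcongr
          exact hD k _
      _ = ((b - a) ^ k)⁻¹ * (D k * (|(x - (a + b) / 2) / (b - a)| / r) ^ N) := by
          rw [one_mul, mul_comm r, ← div_div, abs_div _ r, abs_of_pos (one_pos.trans_le hr)]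
      _ ≤ ((b - a) ^ k)⁻¹ * (D k * (bumpWeight a b x / r) ^ N) := by
          gcongr
          exact abs_sub_midpoint_div_le_bumpWeight hab x
      _ = D k / r ^ N * bumpWeight a b x ^ N / (b - a) ^ k := by
          rw [div_pow]
          ring
  · have hs : 0 < r * (b - a) := mul_pos (one_pos.trans_le hr) (sub_pos.2 hab)
    rw [← one_div_mul_eq_div 2 (r * (b - a)), ← sub_div_mem_closedBall_zero hs,
      Metric.mem_closedBall, not_le] at hx
    simp only [referenceBump.zero_of_le_dist hx.le, sub_zero]

lemma IsAdaptedBump.exists_integral_eq_zero [CompleteSpace E] : ∃ S : ℕ → ℝ,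
    ∀ (A : ℕ → ℕ → ℝ) (a b : ℝ) (φ : ℝ → E), a < b → IsAdaptedBump A a b φ → ∃ F : ℝ → E,
      IsAdaptedBump (fun l α => A l α + A 0 2 * S l) a b F ∧ (∀ x ∉ Icc a b, F x = φ x) ∧
      ∫ x, F x = 0 := by
  obtain ⟨S, hS⟩ := exists_isAdaptedBump_integral_eq
  refine ⟨fun l => 2 * Real.pi * S l, fun A a b φ hab hφ => ?_⟩
  obtain ⟨ρ, hρ, hρ_supp, hρ_int⟩ := hS a b hab
  have hL : 0 < b - a := sub_pos.2 hab
  set v : E := (b - a)⁻¹ • ∫ x, φ x with hv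
  have hv_norm : ‖v‖ ≤ 2 * Real.pi * A 0 2 := by
    rw [hv, norm_smul, norm_inv, Real.norm_of_nonneg hL.le, inv_mul_le_iff₀ hL, mul_comm (b - a)]
    exact hφ.norm_integral_le hab
  have hρv := hρ.smul_const v
  refine ⟨fun x => φ x - ρ x • v, (hφ.sub hρv).mono hab.le fun l α => ?_, fun x hx => ?_, ?_⟩
  · have hS_nonneg : 0 ≤ S l := hρ.constant_nonneg hab l α
    linarith [mul_le_mul_of_nonneg_right hv_norm hS_nonneg]
  · simp only [hρ_supp x hx, zero_smul, sub_zero]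
  · rw [integral_sub (hφ.integrable hab) (hρv.integrable hab), integral_smul_const, hρ_int, hv,
      smul_inv_smul₀ hL.ne', sub_self]

lemma IsAdaptedBump.exists_outer_part [CompleteSpace E] (N : ℕ) (A : ℕ → ℕ → ℝ) :
    ∃ C : ℕ → ℕ → ℝ, ∀ (a b r : ℝ) (φ : ℝ → E), a < b → 1 ≤ r → IsAdaptedBump A a b φ →
      ∃ F : ℝ → E, IsAdaptedBump (fun l α => C l α / r ^ N) a b F ∧
        (∀ x ∉ Metric.closedBall ((a + b) / 2) (r * (b - a) / 2), F x = φ x) ∧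
        ∫ x, F x = 0 := by
  obtain ⟨D, hD⟩ := exists_outer_cutoff N
  obtain ⟨S, hS⟩ := exists_integral_eq_zero (E := E)
  let P (l α : ℕ) : ℝ := ∑ i ∈ Finset.range (l + 1), l.choose i * D i * A (l - i) (α + N)
  refine ⟨fun l α => P l α + P 0 2 * S l, fun a b r φ hab hr hφ => ?_⟩
  obtain ⟨θ, hθ, hθ_le, hθ_one⟩ := hD a b r hab hr
  have hθφ : IsAdaptedBump (fun l α => P l α / r ^ N) a b (fun x => θ x • φ x) := by
    refine (hφ.smul hab hθ hθ_le).mono hab.le fun l α => le_of_eq ?_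
    simp only [P, Finset.sum_div]
    exact Finset.sum_congr rfl fun i _ => by ring
  obtain ⟨F, hF, hF_eq, hF_int⟩ := hS _ a b _ hab hθφ
  refine ⟨F, hF.mono hab.le fun l α => le_of_eq (by ring), fun x hx => ?_, hF_int⟩
  have hx_notMem : x ∉ Icc a b := fun h => hx <| by
    rw [Real.Icc_eq_closedBall] at h
    refine Metric.closedBall_subset_closedBall ?_ h
    gcongr
    exact le_mul_of_one_le_left (sub_pos.2 hab).le hr
  rw [hF_eq x hx_notMem, hθ_one x hx, one_smul]

lemma IsAdaptedBump.exists_tails [CompleteSpace E] (N : ℕ) (A : ℕ → ℕ → ℝ) :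
    ∃ C : ℕ → ℕ → ℝ, ∀ (a b : ℝ) (φ : ℝ → E), a < b → IsAdaptedBump A a b φ → ∃ F : ℕ → ℝ → E,
      F 0 = φ ∧ (∀ n, IsAdaptedBump (fun l α => C l α / 2 ^ (N * n)) a b (F n)) ∧
      (∀ n, ∀ x ∉ Metric.closedBall ((a + b) / 2) (2 ^ n * (b - a) / 2), F n x = F (n + 1) x) ∧
      ((∫ x, φ x) = 0 → ∀ n, ∫ x, F n x = 0) := by
  obtain ⟨B, hB⟩ := exists_outer_part (E := E) N A
  refine ⟨fun l α => A l α + 2 ^ N * B l α, fun a b φ hab hφ => ?_⟩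
  have h_one_le (n : ℕ) : (1 : ℝ) ≤ 2 ^ n := one_le_pow₀ one_le_two
  choose G hG hG_eq hG_int using fun n : ℕ => hB a b (2 ^ n) φ hab (h_one_le n) hφ
  have hA_nonneg := hφ.constant_nonneg hab
  have hB_nonneg (l α : ℕ) : 0 ≤ B l α := by simpa using (hG 0).constant_nonneg hab l α
  refine ⟨fun n => Nat.casesOn n φ G, rfl, ?_, ?_, ?_⟩
  · rintro (_ | n)
    · refine hφ.mono hab.le fun l α => ?_
      simpa using hB_nonneg l α
    · refine (hG n).mono hab.le fun l α => ?_
      rw [mul_add_one, pow_add, mul_comm N n, pow_mul, div_le_div_iff₀ (by positivity)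
        (by positivity)]
      have := hA_nonneg l α
      have : 0 ≤ A l α * (2 ^ n) ^ N := by positivity
      linarith
  · rintro (_ | n) x hx
    · exact (hG_eq 0 x hx).symm
    · have hx_n : x ∉ Metric.closedBall ((a + b) / 2) (2 ^ n * (b - a) / 2) := fun h =>
        hx (Metric.closedBall_subset_closedBall (by
          have := (sub_pos.2 hab).le
          gcongr
          exacts [one_le_two, n.le_succ]) h)
      exact (hG_eq n x hx_n).trans (hG_eq (n + 1) x hx).symm
  · rintro hφ_int (_ | n)
    exacts [hφ_int, hG_int n]

variable {C : ℕ → ℕ → ℝ} {a b : ℝ} {F : ℕ → ℝ → E} {N : ℕ}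

lemma IsAdaptedBump.two_pow_smul_sub_succ {M : ℕ} (hab : a < b) (hMN : M ≤ N)
    (hF : ∀ n, IsAdaptedBump (fun l α => C l α / 2 ^ (N * n)) a b (F n)) (n : ℕ) :
    IsAdaptedBump (fun l α => 2 * C l α) a b
      (fun x => (2 : ℝ) ^ (M * n) • (F n x - F (n + 1) x)) := by
  refine (((hF n).sub (hF (n + 1))).const_smul _).mono hab.le fun l α => ?_
  have hC_nonneg : 0 ≤ C l α := by simpa using (hF 0).constant_nonneg hab l α
  have h_succ : C l α / 2 ^ (N * (n + 1)) ≤ C l α / 2 ^ (N * n) := by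
    gcongr
    exacts [one_le_two, n.le_succ]
  calc ‖(2 : ℝ) ^ (M * n)‖ * (C l α / 2 ^ (N * n) + C l α / 2 ^ (N * (n + 1)))
      ≤ 2 ^ (N * n) * (C l α / 2 ^ (N * n) + C l α / 2 ^ (N * n)) := by
        rw [Real.norm_of_nonneg (by positivity)]
        gcongr
        exact one_le_two
    _ = 2 * C l α := by
        field_simp
        ring

lemma IsAdaptedBump.summable_norm (hN : N ≠ 0)
    (hF : ∀ n, IsAdaptedBump (fun l α => C l α / 2 ^ (N * n)) a b (F n)) (x : ℝ) :
    Summable fun n => ‖F n x‖ := by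
  have h_geom : Summable fun n : ℕ => C 0 0 * ((2 ^ N)⁻¹ : ℝ) ^ n :=
    (summable_geometric_of_lt_one (by positivity)
      (inv_lt_one_of_one_lt₀ (one_lt_pow₀ one_lt_two hN))).mul_left _
  refine h_geom.of_nonneg_of_le (fun _ => norm_nonneg _) fun n => ?_
  simpa only [pow_zero, div_one, inv_pow, ← pow_mul, div_eq_mul_inv, inv_one, mul_one]
    using (hF n).norm_le 0 x

theorem generic_bump_decomposition_general [CompleteSpace E] (N : ℕ) :
    ∀ A : ℕ → ℕ → ℝ, ∃ A' : ℕ → ℕ → ℝ,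
    ∀ (a b : ℝ), a < b → ∀ φ : ℝ → E, ContDiff ℝ ∞ φ →
    (∀ l α : ℕ, ∀ x : ℝ,
        ‖iteratedDeriv l φ x‖ ≤
          A l α * (b - a) ^ (-(l : ℝ)) *
            (1 + Metric.infDist x (Icc a b) / (b - a)) ^ (-(α : ℝ))) →
    ∃ φℓ : ℕ → ℝ → E,
      (∀ ℓ : ℕ, ContDiff ℝ ∞ (φℓ ℓ)) ∧
      (∀ ℓ : ℕ, tsupport (φℓ ℓ) ⊆
          Icc ((a + b) / 2 - 2 ^ ℓ * (b - a) / 2) ((a + b) / 2 + 2 ^ ℓ * (b - a) / 2)) ∧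
      (∀ x : ℝ, HasSum (fun ℓ : ℕ => (2 : ℝ) ^ (-(N * (ℓ : ℤ))) • φℓ ℓ x) (φ x)) ∧
      (∀ l α : ℕ, ∀ ℓ : ℕ, ∀ x : ℝ,
        ‖iteratedDeriv l (φℓ ℓ) x‖ ≤
          A' l α * (b - a) ^ (-(l : ℝ)) *
            (1 + Metric.infDist x (Icc a b) / (b - a)) ^ (-(α : ℝ))) ∧
      ((∫ x : ℝ, φ x) = 0 → ∀ ℓ : ℕ, (∫ x : ℝ, φℓ ℓ x) = 0) := by
  intro A
  -- One power of decay more than the weights `2 ^ (N * n)` absorb makes the tails summable.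
  obtain ⟨C, hC⟩ := IsAdaptedBump.exists_tails (E := E) (N + 1) A
  refine ⟨fun l α => 2 * C l α, fun a b hab φ hφ hA => ?_⟩
  obtain ⟨F, hF_zero, hF, hF_eq, hF_int⟩ := hC a b φ hab (isAdaptedBump_iff_rpow.2 ⟨hφ, hA⟩)
  have hG := IsAdaptedBump.two_pow_smul_sub_succ hab N.le_succ hF
  refine ⟨fun n x => (2 : ℝ) ^ (N * n) • (F n x - F (n + 1) x), fun n => (hG n).contDiff,
    fun n => closure_minimal (fun x hx => ?_) isClosed_Icc, fun x => ?_,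
    fun l α n => (isAdaptedBump_iff_rpow.1 (hG n)).2 l α, fun hφ_int n => ?_⟩
  · rw [← Real.closedBall_eq_Icc]
    contrapose! hx
    rw [Function.notMem_support, hF_eq n x hx, sub_self, smul_zero]
  · rw [← hF_zero]
    convert hasSum_sub_succ (IsAdaptedBump.summable_norm N.succ_ne_zero hF x) using 2 with n
    rw [zpow_neg, ← Nat.cast_mul, zpow_natCast, inv_smul_smul₀ (by positivity)]
  · rw [integral_smul, integral_sub ((hF n).integrable hab) ((hF (n + 1)).integrable hab),
      hF_int hφ_int, hF_int hφ_int, sub_self, smul_zero]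

end AdaptedBump

/-- **Generic decomposition of bumps (Lemma 4.1).** Every smooth bump `φ_J` adapted to a
bounded interval `J = [a,b]` decomposes as `φ_J = Σ_ℓ 2^{−100ℓ} φ^ℓ_J` where each `φ^ℓ_J`
is a bump adapted to `J` (with constants depending only on those of `φ_J`) supported in
`2^ℓ J`; if `∫ φ_J = 0` the pieces can be chosen with `∫ φ^ℓ_J = 0`. -/
theorem generic_bump_decomposition :
    ∀ A : ℕ → ℕ → ℝ, ∃ A' : ℕ → ℕ → ℝ,
    ∀ (a b : ℝ), a < b → ∀ φ : ℝ → ℂ, ContDiff ℝ (⊤ : ℕ∞) φ →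
    (∀ l α : ℕ, ∀ x : ℝ,
        ‖iteratedDeriv l φ x‖ ≤
          A l α * (b - a) ^ (-(l:ℝ)) *
            (1 + Metric.infDist x (Set.Icc a b) / (b - a)) ^ (-(α:ℝ))) →
    ∃ φℓ : ℕ → ℝ → ℂ,
      (∀ ℓ : ℕ, ContDiff ℝ (⊤ : ℕ∞) (φℓ ℓ)) ∧
      (∀ ℓ : ℕ, tsupport (φℓ ℓ) ⊆
          Set.Icc ((a+b)/2 - 2^ℓ * (b-a)/2) ((a+b)/2 + 2^ℓ * (b-a)/2)) ∧
      (∀ x : ℝ, HasSum (fun ℓ : ℕ => (2:ℂ)^(-(100 * (ℓ:ℤ))) * φℓ ℓ x) (φ x)) ∧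
      (∀ l α : ℕ, ∀ ℓ : ℕ, ∀ x : ℝ,
        ‖iteratedDeriv l (φℓ ℓ) x‖ ≤
          A' l α * (b - a) ^ (-(l:ℝ)) *
            (1 + Metric.infDist x (Set.Icc a b) / (b - a)) ^ (-(α:ℝ))) ∧
      ((∫ x : ℝ, φ x) = 0 → ∀ ℓ : ℕ, (∫ x : ℝ, φℓ ℓ x) = 0) := by
  simpa [Complex.real_smul] using generic_bump_decomposition_general (E := ℂ) 100
end

section
/- Logarithmic blow-up of the bi-parameter kernel integral (inequality (1.6)): There exist constants c > 0 and C ≥ 0 such that for every real N ≥ 100, the iterated principal-value integral A(N) := ∫_{−N/10}^{N/10} (1/t) · ( lim_{δ→0⁺} ∫_{δ<|s|<N/10} e^{2ist} (1/s) ds ) dt satisfies |A(N)| ≥ c · log N − C. (For each t the inner limit exists and equals 2i ∫_{0}^{N/10} sin(2st)/s ds, and the resulting function of t extends to an integrable function on [−N/10, N/10].) -/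
open MeasureTheory Filter Set

/-!
The part of `e^{iωs}/s` that is even in `s` is `i sin (ωs)/s`, so with `Si x = ∫₀ˣ sinc` the
truncated inner integral over `δ < |s| < R` is `2i (Si (ωR) - Si (ωδ))`, which tends to
`2i Si (ωR)`. For `ω = 2t` the outer integrand is thus `2i Si (2Rt)/t`. It is bounded near `0`
because `Si` is differentiable there and `Si 0 = 0`, and `Si (2Rt)/t ≥ 0` because `Si` is odd and
nonnegative on the positive axis. Finally `Si` is bounded away from `0` on `[1, ∞)`, so
`Si (2Rt)/t` dominates a multiple of `1/t` on `[1/(2R), R]`, whose integral produces the logarithm.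
-/

section General

variable {E : Type*} [NormedAddCommGroup E] [NormedSpace ℝ E]

theorem setIntegral_annulus_eq_intervalIntegral {f : ℝ → E} {δ R : ℝ} (hδ : 0 ≤ δ) (hδR : δ ≤ R)
    (hf : IntervalIntegrable f volume δ R) (hf_neg : IntervalIntegrable f volume (-R) (-δ)) :
    ∫ s in {s : ℝ | δ < |s| ∧ |s| < R}, f s = ∫ s in δ..R, (f s + f (-s)) := by
  have annulus_eq : {s : ℝ | δ < |s| ∧ |s| < R} = Ioo δ R ∪ Ioo (-R) (-δ) := by
    ext s
    simp only [mem_ofPred_eq, mem_union, mem_Ioo]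
    rcases abs_cases s with ⟨hs, _⟩ | ⟨hs, _⟩ <;> rw [hs] <;> grind
  have hRδ : -R ≤ -δ := neg_le_neg hδR
  have hdisj : Disjoint (Ioo δ R) (Ioo (-R) (-δ)) :=
    Set.disjoint_left.2 fun s hs hs' => by linarith [hs.1, hs'.2]
  have hf_comp_neg : IntervalIntegrable (fun s => f (-s)) volume δ R := by
    simpa only [neg_neg] using ((IntervalIntegrable.iff_comp_neg (by simp)).1 hf_neg).symm
  calc ∫ s in {s : ℝ | δ < |s| ∧ |s| < R}, f s
      = (∫ s in Ioo δ R, f s) + ∫ s in Ioo (-R) (-δ), f s := by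
        rw [annulus_eq, setIntegral_union hdisj measurableSet_Ioo
          ((intervalIntegrable_iff_integrableOn_Ioo_of_le hδR).1 hf)
          ((intervalIntegrable_iff_integrableOn_Ioo_of_le hRδ).1 hf_neg)]
    _ = (∫ s in δ..R, f s) + ∫ s in -R..-δ, f s := by
        simp only [intervalIntegral.integral_of_le, hδR, hRδ, integral_Ioc_eq_integral_Ioo]
    _ = ∫ s in δ..R, (f s + f (-s)) := by
        rw [intervalIntegral.integral_add hf hf_comp_neg, intervalIntegral.integral_comp_neg]

theorem locallyIntegrable_slope {μ : Measure ℝ} [IsLocallyFiniteMeasure μ] [NullSingletonClass μ]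
    {f : ℝ → E} {a : ℝ} (hf : Continuous f) (hfa : DifferentiableAt ℝ f a) :
    LocallyIntegrable (slope f a) μ := by
  have hcont : Continuous (dslope f a) :=
    continuousOn_univ.1 ((continuousOn_dslope univ_mem).2 ⟨hf.continuousOn, hfa⟩)
  have hae : dslope f a =ᵐ[μ] slope f a := by
    filter_upwards [Measure.ae_ne μ a] with t ht using dslope_of_ne f ht
  exact hcont.locallyIntegrable.congr hae

end General

theorem one_sub_sq_div_six_le_sinc (x : ℝ) : 1 - x ^ 2 / 6 ≤ Real.sinc x := by
  wlog hx : 0 < x generalizing x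
  · rcases eq_or_ne x 0 with rfl | hx0
    · simp
    · simpa only [neg_sq, Real.sinc_neg] using this (-x) (by grind)
  rw [Real.sinc_of_ne_zero hx.ne', le_div_iff₀ hx]
  linarith [Real.sin_gt_sub_cube hx]

/-- The sine integral `Si x = ∫₀ˣ (sin u)/u du`; using `Real.sinc` gives the integrand its
limiting value `1` at `u = 0`. -/
noncomputable def sineIntegral (x : ℝ) : ℝ := ∫ u in (0 : ℝ)..x, Real.sinc u

theorem hasDerivAt_sineIntegral (x : ℝ) : HasDerivAt sineIntegral (Real.sinc x) x :=
  Real.continuous_sinc.integral_hasStrictDerivAt 0 x |>.hasDerivAt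

theorem continuous_sineIntegral : Continuous sineIntegral :=
  continuous_iff_continuousAt.2 fun x => (hasDerivAt_sineIntegral x).continuousAt

theorem sineIntegral_zero : sineIntegral 0 = 0 :=
  intervalIntegral.integral_same

theorem sineIntegral_neg (x : ℝ) : sineIntegral (-x) = -sineIntegral x := by
  have h := intervalIntegral.integral_comp_neg (a := 0) (b := -x) Real.sinc
  simp only [Real.sinc_neg, neg_neg, neg_zero] at h
  rw [sineIntegral, h, intervalIntegral.integral_symm, sineIntegral]

theorem integral_mul_sinc_mul (ω δ R : ℝ) :
    ∫ s in δ..R, ω * Real.sinc (ω * s) = sineIntegral (ω * R) - sineIntegral (ω * δ) := by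
  rw [intervalIntegral.integral_const_mul, intervalIntegral.mul_integral_comp_mul_left]
  exact (intervalIntegral.integral_interval_sub_left
    (Real.continuous_sinc.intervalIntegrable _ _)
    (Real.continuous_sinc.intervalIntegrable _ _)).symm

theorem sub_cube_div_eighteen_le_sineIntegral {x : ℝ} (hx : 0 ≤ x) :
    x - x ^ 3 / 18 ≤ sineIntegral x :=
  calc x - x ^ 3 / 18 = ∫ u in (0 : ℝ)..x, (1 - u ^ 2 / 6) := by
        rw [intervalIntegral.integral_sub (by simp)
            (Continuous.intervalIntegrable (by fun_prop) _ _), intervalIntegral.integral_div,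
          integral_pow, intervalIntegral.integral_const]
        simp only [smul_eq_mul]
        ring
    _ ≤ sineIntegral x :=
        intervalIntegral.integral_mono_on hx (Continuous.intervalIntegrable (by fun_prop) _ _)
          (Real.continuous_sinc.intervalIntegrable _ _) fun u _ => one_sub_sq_div_six_le_sinc u

theorem hasDerivAt_sineIntegral_sub_one_sub_cos_div {x : ℝ} (hx : x ≠ 0) :
    HasDerivAt (fun y => sineIntegral y - (1 - Real.cos y) / y) ((1 - Real.cos x) / x ^ 2) x := by
  have h := (hasDerivAt_sineIntegral x).sub
    (((Real.hasDerivAt_cos x).const_sub 1).fun_div (hasDerivAt_id' x) hx)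
  refine h.congr_deriv ?_
  rw [Real.sinc_of_ne_zero hx]
  field_simp
  ring

-- Integrating by parts, `Si y - (1 - cos y)/y = ∫₀ʸ (1 - cos u)/u² du`, whose integrand is `≥ 0`.
theorem monotoneOn_sineIntegral_sub_one_sub_cos_div :
    MonotoneOn (fun y => sineIntegral y - (1 - Real.cos y) / y) (Ioi 0) := by
  have hderiv := fun (y : ℝ) (hy : 0 < y) =>
    hasDerivAt_sineIntegral_sub_one_sub_cos_div hy.ne'
  refine monotoneOn_of_deriv_nonneg (convex_Ioi 0)
    (fun y hy => (hderiv y hy).continuousAt.continuousWithinAt) ?_ ?_ <;>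
    rw [interior_Ioi] <;> intro y hy
  · exact (hderiv y hy).differentiableAt.differentiableWithinAt
  · rw [(hderiv y hy).deriv]
    exact div_nonneg (sub_nonneg.2 (Real.cos_le_one y)) (sq_nonneg y)

theorem one_fourth_le_sineIntegral {x : ℝ} (hx : 1 ≤ x) : 1 / 4 ≤ sineIntegral x := by
  have hx0 : 0 < x := one_pos.trans_le hx
  have hmono := monotoneOn_sineIntegral_sub_one_sub_cos_div (mem_Ioi.2 one_pos) (mem_Ioi.2 hx0) hx
  simp only [div_one] at hmono
  have hquot : 0 ≤ (1 - Real.cos x) / x := div_nonneg (sub_nonneg.2 (Real.cos_le_one x)) hx0.le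
  linarith [sub_cube_div_eighteen_le_sineIntegral zero_le_one,
    Real.one_sub_sq_div_two_le_cos (x := 1)]

theorem sineIntegral_nonneg {x : ℝ} (hx : 0 ≤ x) : 0 ≤ sineIntegral x := by
  rcases le_total x 1 with hx1 | hx1
  · have hcube : x ^ 3 ≤ x := pow_le_of_le_one hx hx1 three_ne_zero
    linarith [sub_cube_div_eighteen_le_sineIntegral hx]
  · linarith [one_fourth_le_sineIntegral hx1]

theorem sineIntegral_mul_div_nonneg {a : ℝ} (ha : 0 ≤ a) (t : ℝ) :
    0 ≤ sineIntegral (a * t) / t := by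
  rcases le_total 0 t with ht | ht
  · exact div_nonneg (sineIntegral_nonneg (mul_nonneg ha ht)) ht
  · rw [← neg_div_neg_eq, ← sineIntegral_neg, ← mul_neg]
    have ht' : 0 ≤ -t := neg_nonneg.2 ht
    exact div_nonneg (sineIntegral_nonneg (mul_nonneg ha ht')) ht'

theorem locallyIntegrable_sineIntegral_mul_div (a : ℝ) :
    LocallyIntegrable fun t => sineIntegral (a * t) / t := by
  have hcont : Continuous fun t => sineIntegral (a * t) :=
    continuous_sineIntegral.comp (continuous_const_mul a)
  have hdiff : DifferentiableAt ℝ (fun t => sineIntegral (a * t)) 0 :=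
    (hasDerivAt_sineIntegral _).differentiableAt.comp 0 (differentiableAt_id.const_mul a)
  convert locallyIntegrable_slope (μ := volume) hcont hdiff using 2 with t
  rw [slope_def_field, mul_zero, sineIntegral_zero, sub_zero, sub_zero]

theorem one_fourth_mul_log_le_setIntegral_sineIntegral_mul_div {a R : ℝ} (ha : 0 < a) (hR : 0 < R) :
    1 / 4 * Real.log (a * R) ≤ ∫ t in Icc (-R) R, sineIntegral (a * t) / t := by
  have hint (b : ℝ) : IntegrableOn (fun t => sineIntegral (a * t) / t) (Icc b R) :=
    (locallyIntegrable_sineIntegral_mul_div a).integrableOn_isCompact isCompact_Icc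
  have hnonneg := sineIntegral_mul_div_nonneg ha.le
  rcases lt_or_ge (a * R) 1 with haR | haR
  · have hlog : Real.log (a * R) ≤ 0 := Real.log_nonpos (mul_pos ha hR).le haR.le
    linarith [setIntegral_nonneg (μ := volume) (measurableSet_Icc (a := -R) (b := R))
      fun t _ => hnonneg t]
  have ha' : 0 < a⁻¹ := inv_pos.2 ha
  have haR' : a⁻¹ ≤ R := (inv_le_iff_one_le_mul₀' ha).2 haR
  have hlower (t : ℝ) (ht : t ∈ Icc a⁻¹ R) : 1 / 4 * (1 / t) ≤ sineIntegral (a * t) / t := by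
    have hat : 1 ≤ a * t := (inv_le_iff_one_le_mul₀' ha).1 ht.1
    rw [mul_one_div]
    exact div_le_div_of_nonneg_right (one_fourth_le_sineIntegral hat) (ha'.trans_le ht.1).le
  calc 1 / 4 * Real.log (a * R) = ∫ t in a⁻¹..R, 1 / 4 * (1 / t) := by
        rw [intervalIntegral.integral_const_mul, integral_one_div_of_pos ha' hR, div_inv_eq_mul,
          mul_comm R]
    _ ≤ ∫ t in a⁻¹..R, sineIntegral (a * t) / t := by
        refine intervalIntegral.integral_mono_on haR' ?_ ?_ hlower
        · refine (intervalIntegral.intervalIntegrable_one_div (fun t ht => ?_)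
            continuousOn_id).const_mul _
          rw [uIcc_of_le haR'] at ht
          exact (ha'.trans_le ht.1).ne'
        · exact (intervalIntegrable_iff_integrableOn_Icc_of_le haR').2 (hint _)
    _ = ∫ t in Icc a⁻¹ R, sineIntegral (a * t) / t := by
        rw [intervalIntegral.integral_of_le haR', integral_Icc_eq_integral_Ioc]
    _ ≤ ∫ t in Icc (-R) R, sineIntegral (a * t) / t :=
        setIntegral_mono_set (hint _) (Eventually.of_forall hnonneg)
          (Icc_subset_Icc_left (by linarith)).eventuallyLE

theorem exp_mul_I_div_add_exp_neg_mul_I_div (ω : ℝ) {s : ℝ} (hs : s ≠ 0) :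
    Complex.exp (ω * s * Complex.I) * (1 / s) +
      Complex.exp (ω * (-s : ℝ) * Complex.I) * (1 / (-s : ℝ)) =
    2 * Complex.I * (ω * Real.sinc (ω * s) : ℝ) := by
  have hsinc : ω * Real.sinc (ω * s) = Real.sin (ω * s) / s := by
    rcases eq_or_ne ω 0 with rfl | hω
    · simp
    · rw [Real.sinc_of_ne_zero (mul_ne_zero hω hs)]
      field_simp
  have hsin := Complex.two_sin (ω * s)
  rw [hsinc]
  push_cast
  rw [mul_neg, ← sub_eq_zero]
  linear_combination (-(Complex.I) / s) * hsin -
    (Complex.exp (-(ω * s) * Complex.I) - Complex.exp (ω * s * Complex.I)) / s * Complex.I_sq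

theorem setIntegral_annulus_exp_mul_I_div (ω : ℝ) {δ R : ℝ} (hδ : 0 < δ) (hδR : δ ≤ R) :
    ∫ s in {s : ℝ | δ < |s| ∧ |s| < R}, Complex.exp (ω * s * Complex.I) * (1 / s) =
      2 * Complex.I * (sineIntegral (ω * R) - sineIntegral (ω * δ) : ℝ) := by
  have hint (a b : ℝ) (h0 : 0 ∉ uIcc a b) :
      IntervalIntegrable (fun s : ℝ => Complex.exp (ω * s * Complex.I) * (1 / s)) volume a b := by
    refine ContinuousOn.intervalIntegrable fun s hs => ?_
    have hs0 : (s : ℂ) ≠ 0 := Complex.ofReal_ne_zero.2 (ne_of_mem_of_not_mem hs h0)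
    exact ContinuousAt.continuousWithinAt (by fun_prop (disch := assumption))
  rw [setIntegral_annulus_eq_intervalIntegral hδ.le hδR
      (hint _ _ (notMem_uIcc_of_lt hδ (hδ.trans_le hδR)))
      (hint _ _ (notMem_uIcc_of_gt (by linarith) (by linarith))),
    ← integral_mul_sinc_mul, ← intervalIntegral.integral_ofReal,
    ← intervalIntegral.integral_const_mul]
  refine intervalIntegral.integral_congr fun s hs => exp_mul_I_div_add_exp_neg_mul_I_div ω ?_
  rw [uIcc_of_le hδR] at hs
  exact (hδ.trans_le hs.1).ne'

theorem tendsto_setIntegral_annulus_exp_mul_I_div (ω : ℝ) {R : ℝ} (hR : 0 < R) :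
    Tendsto
      (fun δ : ℝ =>
        ∫ s in {s : ℝ | δ < |s| ∧ |s| < R}, Complex.exp (ω * s * Complex.I) * (1 / s))
      (nhdsWithin 0 (Ioi 0)) (nhds (2 * Complex.I * sineIntegral (ω * R))) := by
  have hcont : Continuous fun δ : ℝ =>
      2 * Complex.I * (sineIntegral (ω * R) - sineIntegral (ω * δ) : ℝ) := by
    have := continuous_sineIntegral
    fun_prop
  have hlim := (hcont.tendsto 0).mono_left (nhdsWithin_le_nhds (s := Ioi 0))
  rw [mul_zero, sineIntegral_zero, sub_zero] at hlim
  refine hlim.congr' ?_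
  filter_upwards [Ioo_mem_nhdsGT hR] with δ hδ
  exact (setIntegral_annulus_exp_mul_I_div ω hδ.1 hδ.2.le).symm

theorem log_blowup_biparameter_kernel_general {R : ℝ} (hR : 0 < R) :
    ∃ g : ℝ → ℂ,
      (∀ t : ℝ, Tendsto
          (fun δ : ℝ =>
            ∫ s in {s : ℝ | δ < |s| ∧ |s| < R},
              Complex.exp (2 * Complex.I * (s : ℂ) * (t : ℂ)) * (1 / (s : ℂ)))
          (nhdsWithin 0 (Ioi 0)) (nhds (g t))) ∧
      IntegrableOn (fun t : ℝ => (1 / (t : ℂ)) * g t) (Icc (-R) R) volume ∧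
      Real.log R ≤ ‖∫ t in Icc (-R) R, (1 / (t : ℂ)) * g t‖ := by
  have houter (t : ℝ) : (1 / (t : ℂ)) * (2 * Complex.I * sineIntegral (2 * t * R)) =
      2 * Complex.I * (sineIntegral (2 * R * t) / t : ℝ) := by
    rw [mul_right_comm 2 t R]
    push_cast
    ring
  refine ⟨fun t => 2 * Complex.I * sineIntegral (2 * t * R), fun t => ?_, ?_, ?_⟩
  · refine (tendsto_setIntegral_annulus_exp_mul_I_div (2 * t) hR).congr fun δ => ?_
    congr! 4 with s
    push_cast
    ring
  · simp only [houter]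
    exact ((locallyIntegrable_sineIntegral_mul_div (2 * R)).integrableOn_isCompact
      isCompact_Icc).ofReal.const_mul _
  · have hlower := one_fourth_mul_log_le_setIntegral_sineIntegral_mul_div (mul_pos two_pos hR) hR
    have hlog : Real.log (2 * R * R) = Real.log 2 + 2 * Real.log R := by
      rw [Real.log_mul (by positivity) hR.ne', Real.log_mul two_ne_zero hR.ne']
      ring
    simp only [houter]
    rw [integral_const_mul, integral_complex_ofReal, norm_mul, Complex.norm_real, norm_mul,
      Complex.norm_I, Complex.norm_two, mul_one]
    linarith [Real.log_pos one_lt_two, Real.le_norm_self (∫ t in Icc (-R) R,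
      sineIntegral (2 * R * t) / t)]

/-- **Logarithmic blow-up of the bi-parameter kernel integral (inequality (1.6)).**
There are constants `c > 0`, `C ≥ 0` such that for every `N ≥ 100` the iterated
principal-value integral
`A(N) = ∫_{−N/10}^{N/10} (1/t) (lim_{δ→0⁺} ∫_{δ<|s|<N/10} e^{2ist} ds/s) dt`
satisfies `|A(N)| ≥ c log N − C`. -/
theorem log_blowup_biparameter_kernel :
    ∃ c C : ℝ, 0 < c ∧ 0 ≤ C ∧ ∀ N : ℝ, 100 ≤ N →
      ∃ g : ℝ → ℂ,
        (∀ t : ℝ, Tendsto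
            (fun δ : ℝ =>
              ∫ s in {s : ℝ | δ < |s| ∧ |s| < N/10},
                Complex.exp (2 * Complex.I * (s:ℂ) * (t:ℂ)) * (1/(s:ℂ)))
            (nhdsWithin 0 (Set.Ioi 0)) (nhds (g t))) ∧
        IntegrableOn (fun t : ℝ => (1/(t:ℂ)) * g t) (Set.Icc (-(N/10)) (N/10)) volume ∧
        c * Real.log N - C ≤ ‖∫ t in Set.Icc (-(N/10)) (N/10), (1/(t:ℂ)) * g t‖ := by
  refine ⟨1, Real.log 10, one_pos, Real.log_nonneg (by norm_num), fun N hN => ?_⟩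
  rw [one_mul, ← Real.log_div (by linarith) (by norm_num)]
  exact log_blowup_biparameter_kernel_general (by linarith)
end
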